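/- Let J ∈ ℕ and μ > 0, and let f : ℝ^J → ℝ be defined by f(m) = μ ln(1 + ∑_{k=1}^J exp(m_k/μ)). Then the gradient map m ↦ ∇f(m) is Lipschitz continuous on ℝ^J (with respect to the Euclidean norm) with Lipschitz constant 1/μ. -/

import Mathlib

/-!
Up to rescaling `m` by `μ⁻¹`, the gradient is the truncated softmax `p`, with
`p j = exp (m j - log (1 + ∑ k, exp (m k)))`. Differentiating this form gives
`∂ᵥ (p j) = p j * (v j - ⟪p, v⟫)`. As `p` is a sub-probability vector, `p j ^ 2 ≤ p j`, so the
squared norm of `∂ᵥ p` is at most the variance-like quantity `∑ j, p j * (v j - ⟪p, v⟫) ^ 2`, which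
is at most `∑ j, p j * v j ^ 2 ≤ ‖v‖ ^ 2`. The mean value inequality concludes.
-/

open Real

theorem sum_mul_sq_sub_sum_mul_le {ι : Type*} (s : Finset ι) (p v : ι → ℝ)
    (hp : ∑ j ∈ s, p j ≤ 1) :
    ∑ j ∈ s, p j * (v j - ∑ k ∈ s, p k * v k) ^ 2
      ≤ ∑ j ∈ s, p j * v j ^ 2 - (∑ j ∈ s, p j * v j) ^ 2 := by
  set a := ∑ k ∈ s, p k * v k with ha
  calc ∑ j ∈ s, p j * (v j - a) ^ 2
      = ∑ j ∈ s, (p j * v j ^ 2 - 2 * a * (p j * v j) + a ^ 2 * p j) :=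
        Finset.sum_congr rfl fun j _ => by ring
    _ = ∑ j ∈ s, p j * v j ^ 2 - 2 * a * a + a ^ 2 * ∑ j ∈ s, p j := by
        rw [Finset.sum_add_distrib, Finset.sum_sub_distrib, ← Finset.mul_sum, ← Finset.mul_sum,
          ← ha]
    _ ≤ ∑ j ∈ s, p j * v j ^ 2 - 2 * a * a + a ^ 2 * 1 := by gcongr
    _ = ∑ j ∈ s, p j * v j ^ 2 - a ^ 2 := by ring

theorem sum_sq_mul_sub_sum_mul_le_sum_sq {ι : Type*} (s : Finset ι) (p v : ι → ℝ)
    (hp₀ : ∀ j ∈ s, 0 ≤ p j) (hp : ∑ j ∈ s, p j ≤ 1) :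
    ∑ j ∈ s, (p j * (v j - ∑ k ∈ s, p k * v k)) ^ 2 ≤ ∑ j ∈ s, v j ^ 2 := by
  have hp₁ : ∀ j ∈ s, p j ≤ 1 := fun j hj => (Finset.single_le_sum hp₀ hj).trans hp
  set a := ∑ k ∈ s, p k * v k
  calc ∑ j ∈ s, (p j * (v j - a)) ^ 2
      = ∑ j ∈ s, p j ^ 2 * (v j - a) ^ 2 := by simp only [mul_pow]
    _ ≤ ∑ j ∈ s, p j * (v j - a) ^ 2 := by
        gcongr with j hj
        exact pow_le_of_le_one (hp₀ j hj) (hp₁ j hj) two_ne_zero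
    _ ≤ ∑ j ∈ s, p j * v j ^ 2 - a ^ 2 := sum_mul_sq_sub_sum_mul_le s p v hp
    _ ≤ ∑ j ∈ s, p j * v j ^ 2 := sub_le_self _ (sq_nonneg a)
    _ ≤ ∑ j ∈ s, v j ^ 2 :=
        Finset.sum_le_sum fun j hj => mul_le_of_le_one_left (sq_nonneg _) (hp₁ j hj)

section TruncSoftmax

variable {ι : Type*} [Fintype ι]

/-- The smooth approximation, at scale `μ = 1`, of the truncated maximum `max 0 (max_j m j)`; the
summand `1 = exp 0` accounts for the truncation at `0`. -/
noncomputable def logOneAddSumExp (m : EuclideanSpace ℝ ι) : ℝ :=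
  log (1 + ∑ k, exp (m k))

/-- The gradient of `logOneAddSumExp`: the softmax of `m` extended by an extra coordinate `0`, with
that coordinate then dropped. -/
noncomputable def truncSoftmax (m : EuclideanSpace ℝ ι) : EuclideanSpace ℝ ι :=
  WithLp.toLp 2 fun j => exp (m j) / (1 + ∑ k, exp (m k))

theorem one_add_sum_exp_pos (m : EuclideanSpace ℝ ι) : 0 < 1 + ∑ k, exp (m k) := by
  positivity

theorem truncSoftmax_apply (m : EuclideanSpace ℝ ι) (j : ι) :
    truncSoftmax m j = exp (m j) / (1 + ∑ k, exp (m k)) :=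
  rfl

theorem truncSoftmax_nonneg (m : EuclideanSpace ℝ ι) (j : ι) : 0 ≤ truncSoftmax m j :=
  div_nonneg (exp_nonneg _) (one_add_sum_exp_pos m).le

theorem sum_truncSoftmax_le_one (m : EuclideanSpace ℝ ι) : ∑ j, truncSoftmax m j ≤ 1 := by
  simp only [truncSoftmax_apply]
  rw [← Finset.sum_div, div_le_one (one_add_sum_exp_pos m)]
  exact le_add_of_nonneg_left zero_le_one

theorem truncSoftmax_apply_eq_exp_sub (m : EuclideanSpace ℝ ι) (j : ι) :
    truncSoftmax m j = exp (m j - logOneAddSumExp m) := by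
  rw [exp_sub, logOneAddSumExp, exp_log (one_add_sum_exp_pos m), truncSoftmax_apply]

theorem hasGradientAt_logOneAddSumExp (m : EuclideanSpace ℝ ι) :
    HasGradientAt logOneAddSumExp (truncSoftmax m) m := by
  have hsum : HasFDerivAt (fun m : EuclideanSpace ℝ ι => 1 + ∑ k, exp (m k))
      (∑ k, exp (m k) • EuclideanSpace.proj (𝕜 := ℝ) k) m :=
    (HasFDerivAt.fun_sum fun k _ =>
      (EuclideanSpace.proj (𝕜 := ℝ) k).hasFDerivAt.exp).const_add 1
  refine hasGradientAt_iff_hasFDerivAt.2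
    ((hsum.log (one_add_sum_exp_pos m).ne').congr_fderiv ?_)
  ext v
  simp [PiLp.inner_apply, truncSoftmax_apply, Finset.mul_sum, div_eq_inv_mul, mul_comm,
    mul_left_comm, mul_assoc]

theorem hasFDerivAt_truncSoftmax_apply (m : EuclideanSpace ℝ ι) (j : ι) :
    HasFDerivAt (fun m => truncSoftmax m j)
      (truncSoftmax m j • (EuclideanSpace.proj j - innerSL ℝ (truncSoftmax m))) m := by
  simp only [truncSoftmax_apply_eq_exp_sub _ j]
  exact ((EuclideanSpace.proj (𝕜 := ℝ) j).hasFDerivAt.sub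
    (hasGradientAt_logOneAddSumExp m).hasFDerivAt).exp

theorem differentiable_truncSoftmax : Differentiable ℝ (truncSoftmax (ι := ι)) :=
  differentiable_euclidean.2 fun j m => (hasFDerivAt_truncSoftmax_apply m j).differentiableAt

theorem fderiv_truncSoftmax_apply (m v : EuclideanSpace ℝ ι) (j : ι) :
    fderiv ℝ truncSoftmax m v j = truncSoftmax m j * (v j - ∑ k, truncSoftmax m k * v k) := by
  have hcoord := (EuclideanSpace.proj (𝕜 := ℝ) j).hasFDerivAt.comp m
    (differentiable_truncSoftmax m).hasFDerivAt
  have heq := hcoord.unique (hasFDerivAt_truncSoftmax_apply m j)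
  simpa [PiLp.inner_apply, mul_comm] using DFunLike.congr_fun heq v

theorem norm_fderiv_truncSoftmax_le_one (m : EuclideanSpace ℝ ι) :
    ‖fderiv ℝ truncSoftmax m‖ ≤ 1 := by
  refine ContinuousLinearMap.opNorm_le_bound _ zero_le_one fun v => ?_
  rw [one_mul, ← sq_le_sq₀ (norm_nonneg _) (norm_nonneg _), EuclideanSpace.real_norm_sq_eq,
    EuclideanSpace.real_norm_sq_eq]
  simp only [fderiv_truncSoftmax_apply]
  exact sum_sq_mul_sub_sum_mul_le_sum_sq _ _ _ (fun j _ => truncSoftmax_nonneg m j)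
    (sum_truncSoftmax_le_one m)

theorem lipschitzWith_one_truncSoftmax : LipschitzWith 1 (truncSoftmax (ι := ι)) :=
  lipschitzWith_of_nnnorm_fderiv_le differentiable_truncSoftmax norm_fderiv_truncSoftmax_le_one

end TruncSoftmax

/-- The gradient map of the μ-smooth approximation `f(m) = μ ln(1 + ∑_k exp(m_k/μ))`,
namely `m ↦ (exp(m_j/μ) / (1 + ∑_k exp(m_k/μ)))_j`, is Lipschitz continuous on
Euclidean space with constant `1/μ`. -/
theorem logsumexp_grad_lipschitz (J : ℕ) (μ : ℝ) (hμ : 0 < μ)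
    (F : EuclideanSpace ℝ (Fin J) → EuclideanSpace ℝ (Fin J))
    (hF : ∀ m j, F m j = Real.exp (m j / μ) / (1 + ∑ k, Real.exp (m k / μ)))
    (c : NNReal) (hc : (c : ℝ) = 1 / μ) :
    LipschitzWith c F := by
  have hF_eq : F = truncSoftmax ∘ (μ⁻¹ • ·) := by
    ext m j
    simp [hF, truncSoftmax_apply, div_eq_inv_mul]
  have hc_eq : c = 1 * ‖μ⁻¹‖₊ := NNReal.eq (by simp [hc, abs_of_pos hμ])
  rw [hF_eq, hc_eq]
  exact lipschitzWith_one_truncSoftmax.comp (lipschitzWith_smul μ⁻¹)
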